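/- For a permutation $\pi=\pi(1)\pi(2)\cdots\pi(n)$ of $[n]=\{1,\dots,n\}$, a descent is an index $i\in\{1,\dots,n-1\}$ with $\pi(i)>\pi(i+1)$, and a peak is an index $i\in\{2,\dots,n-1\}$ with $\pi(i-1)<\pi(i)>\pi(i+1)$; the cycle type of $\pi$ is the partition of $n$ formed by its cycle lengths, fixed points included. Let $n\ge 1$ and let $\lambda$ be a partition of $n$ such that no part of $\lambda$ is congruent to $2$ modulo $4$ and every odd part of $\lambda$ occurs exactly once. Then for all integers $j,k\ge 0$, the number of permutations of $[n]$ with cycle type $\lambda$ having exactly $j$ peaks and exactly $k$ descents equals the number of permutations of $[n]$ with cycle type $\lambda$ having exactly $j$ peaks and exactly $n-1-k$ descents (both numbers are $0$ when $k\ge n$). -/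

import Mathlib

/-- The letter `π(i)` of the one-line notation `π(1)π(2)⋯π(n)` of a permutation of
`[n] = {1, …, n}`, realized on `Fin n` by `i ↦ i - 1`. It is only used for `1 ≤ i ≤ n`; the value
elsewhere is `0`. -/
def oneLine (n : ℕ) (π : Equiv.Perm (Fin n)) (i : ℕ) : ℕ :=
  if h : 1 ≤ i ∧ i ≤ n then (π ⟨i - 1, by omega⟩).val + 1 else 0

/-- The number of descents: indices `1 ≤ i ≤ n - 1` with `π(i) > π(i+1)`. -/
def des (n : ℕ) (π : Equiv.Perm (Fin n)) : ℕ :=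
  ((Finset.Icc 1 (n - 1)).filter fun i => oneLine n π i > oneLine n π (i + 1)).card

/-- The number of peaks: indices `2 ≤ i ≤ n - 1` with `π(i-1) < π(i) > π(i+1)`. -/
def pk (n : ℕ) (π : Equiv.Perm (Fin n)) : ℕ :=
  ((Finset.Icc 2 (n - 1)).filter fun i =>
    oneLine n π (i - 1) < oneLine n π i ∧ oneLine n π i > oneLine n π (i + 1)).card

open Equiv

/-- The sequence of colours `f x, f (π x), f (π² x), …` seen along the orbit of `x`. -/
def colorWord {n : ℕ} (f : Fin n → ℤ) (π : Perm (Fin n)) (x : Fin n) : ℕ → ℤ :=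
  fun k => f ((π ^ k) x)

/-- The colour word of `x` twisted by powers of `ε`, with the lexicographic order. -/
def signedWord {n : ℕ} (ε : ℤˣ) (f : Fin n → ℤ) (π : Perm (Fin n)) (x : Fin n) : Lex (ℕ → ℤ) :=
  toLex fun k => ((ε ^ k : ℤˣ) : ℤ) * f ((π ^ k) x)

/-- `π` is increasing (for `ε = 1`) or decreasing (for `ε = -1`) on each fibre of `f`. -/
def FiberMono {n : ℕ} (ε : ℤˣ) (f : Fin n → ℤ) (π : Perm (Fin n)) : Prop :=
  ∀ x y, x < y → f x = f y → (ε : ℤ) * (π x : ℕ) < (ε : ℤ) * (π y : ℕ)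

/-- No two points of a cycle of `π` have the same colour word. -/
def IsPrimitive {n : ℕ} (f : Fin n → ℤ) (π : Perm (Fin n)) : Prop :=
  ∀ x k, colorWord f π ((π ^ k) x) = colorWord f π x → (π ^ k) x = x

section Words

variable {n : ℕ} {ε : ℤˣ} {f : Fin n → ℤ} {π : Perm (Fin n)}

theorem colorWord_pow_apply (x : Fin n) (k j : ℕ) :
    colorWord f π ((π ^ k) x) j = colorWord f π x (j + k) := by
  simp [colorWord, pow_add]

theorem colorWord_pow_congr {x y : Fin n} (h : colorWord f π x = colorWord f π y) (k : ℕ) :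
    colorWord f π ((π ^ k) x) = colorWord f π ((π ^ k) y) := by
  funext j
  rw [colorWord_pow_apply, colorWord_pow_apply, h]

theorem signedWord_eq_iff {x y : Fin n} :
    signedWord ε f π x = signedWord ε f π y ↔ colorWord f π x = colorWord f π y := by
  unfold signedWord colorWord
  rw [toLex_inj, funext_iff, funext_iff]
  refine forall_congr' fun k => ?_
  exact mul_right_inj' (Units.ne_zero _)

theorem signedWord_lt_iff {x y : Fin n} :
    signedWord ε f π x < signedWord ε f π y ↔
      ∃ i, (∀ j < i, f ((π ^ j) x) = f ((π ^ j) y)) ∧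
        ((ε ^ i : ℤˣ) : ℤ) * f ((π ^ i) x) < ((ε ^ i : ℤˣ) : ℤ) * f ((π ^ i) y) := by
  constructor
  · rintro ⟨i, h1, h2⟩
    exact ⟨i, fun j hj => mul_left_cancel₀ (Units.ne_zero (ε ^ j)) (h1 j hj), h2⟩
  · rintro ⟨i, h1, h2⟩
    exact ⟨i, fun j hj => by simp [signedWord, h1 j hj], h2⟩

theorem FiberMono.pow_lt (h : FiberMono ε f π) {x y : Fin n} (hxy : x < y) (k : ℕ)
    (hf : ∀ j < k, f ((π ^ j) x) = f ((π ^ j) y)) :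
    ((ε ^ k : ℤˣ) : ℤ) * ((π ^ k) x : ℕ) < ((ε ^ k : ℤˣ) : ℤ) * ((π ^ k) y : ℕ) := by
  induction k with
  | zero => simpa using hxy
  | succ k ih =>
    have ih := ih fun j hj => hf j (by omega)
    have hk := hf k (by omega)
    rw [pow_succ' π, Perm.mul_apply, Perm.mul_apply, pow_succ ε]
    rcases Int.units_eq_one_or (ε ^ k) with e | e <;> rw [e] at ih ⊢
    · have : (π ^ k) x < (π ^ k) y := by simpa using ih
      simpa using h _ _ this hk
    · have : (π ^ k) y < (π ^ k) x := by simpa using ih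
      have := h _ _ this hk.symm
      simp only [Units.val_mul, Units.val_neg, Units.val_one]
      linarith

theorem FiberMono.monotone_signedWord (h : FiberMono ε f π) (hf : Monotone f) :
    Monotone (signedWord ε f π) := by
  intro x y hxy
  rcases hxy.eq_or_lt with rfl | hlt
  · exact le_rfl
  by_contra hc
  obtain ⟨i, h1, h2⟩ := signedWord_lt_iff.1 (not_le.1 hc)
  have h3 := h.pow_lt hlt i fun j hj => (h1 j hj).symm
  rcases Int.units_eq_one_or (ε ^ i) with e | e <;> rw [e] at h2 h3
  · have : (π ^ i) x < (π ^ i) y := by simpa using h3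
    have := hf this.le
    simp only [Units.val_one] at h2
    linarith
  · have : (π ^ i) y < (π ^ i) x := by simpa using h3
    have := hf this.le
    simp only [Units.val_neg, Units.val_one] at h2
    linarith

/-- A permutation that is increasing on an invariant set of points fixes that set pointwise. -/
theorem apply_eq_self_of_strictMonoOn {τ : Perm (Fin n)} {S : Set (Fin n)}
    (hS : ∀ x ∈ S, τ x ∈ S) (hmono : StrictMonoOn τ S) {x : Fin n} (hx : x ∈ S) : τ x = x := by
  have hmem : ∀ y ∈ S, ∀ k : ℕ, (τ ^ k) y ∈ S := by
    intro y hy k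
    induction k with
    | zero => simpa
    | succ k ih => rw [pow_succ', Perm.mul_apply]; exact hS _ ih
  have hpow : ∀ y ∈ S, ∀ z ∈ S, y < z → ∀ k : ℕ, (τ ^ k) y < (τ ^ k) z := by
    intro y hy z hz hyz k
    induction k with
    | zero => simpa
    | succ k ih =>
      rw [pow_succ', Perm.mul_apply, Perm.mul_apply]
      exact hmono (hmem y hy k) (hmem z hz k) ih
  have hsucc : ∀ k : ℕ, (τ ^ k) (τ x) = (τ ^ (k + 1)) x := fun k => by
    rw [pow_succ, Perm.mul_apply]
  have hN : (τ ^ (orderOf τ - 1 + 1)) x = x := by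
    rw [Nat.sub_add_cancel (orderOf_pos τ), pow_orderOf_eq_one, Perm.one_apply]
  rcases lt_trichotomy (τ x) x with h | h | h
  · have : StrictAnti fun k : ℕ => (τ ^ k) x :=
      strictAnti_nat_of_succ_lt fun k => by
        rw [← hsucc]; exact hpow _ (hS x hx) _ hx h k
    have := this (Nat.succ_pos (orderOf τ - 1))
    simp only [Nat.succ_eq_add_one, hN, pow_zero, Perm.one_apply, lt_self_iff_false] at this
  · exact h
  · have : StrictMono fun k : ℕ => (τ ^ k) x :=
      strictMono_nat_of_lt_succ fun k => by
        rw [← hsucc]; exact hpow _ hx _ (hS x hx) h k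
    have := this (Nat.succ_pos (orderOf τ - 1))
    simp only [Nat.succ_eq_add_one, hN, pow_zero, Perm.one_apply, lt_self_iff_false] at this

theorem FiberMono.pow_apply_eq_self (h : FiberMono ε f π) {x : Fin n} {k : ℕ} (hk : ε ^ k = 1)
    (hx : colorWord f π ((π ^ k) x) = colorWord f π x) : (π ^ k) x = x := by
  refine apply_eq_self_of_strictMonoOn (S := {y | colorWord f π y = colorWord f π x}) ?_ ?_ rfl
  · intro y hy
    exact (colorWord_pow_congr hy k).trans hx
  · intro y hy z hz hyz
    have := h.pow_lt hyz k fun j _ => congrFun (hy.trans hz.symm) j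
    simpa [hk] using this

theorem FiberMono.isPrimitive (h : FiberMono ε f π)
    (hε : ε = 1 ∨ ∀ x k, Odd k → (π ^ (2 * k)) x = x → (π ^ k) x = x) : IsPrimitive f π := by
  intro x k hx
  rcases hε with rfl | hε
  · exact h.pow_apply_eq_self (one_pow k) hx
  rcases Nat.even_or_odd k with hk | hk
  · exact h.pow_apply_eq_self (by obtain ⟨m, rfl⟩ := hk; rw [← two_mul, pow_mul, Int.units_sq, one_pow]) hx
  · refine hε x k hk (h.pow_apply_eq_self ?_ ?_)
    · rw [pow_mul, Int.units_sq, one_pow]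
    · rw [two_mul, pow_add, Perm.mul_apply]
      exact (colorWord_pow_congr hx k).trans hx

theorem conj_pow_apply (g : Perm (Fin n)) (k : ℕ) (x : Fin n) :
    ((g * π * g⁻¹) ^ k) (g x) = g ((π ^ k) x) := by
  rw [conj_pow]
  simp

theorem signedWord_conj {g : Perm (Fin n)} (hg : ∀ x, f (g x) = f x) (x : Fin n) :
    signedWord ε f (g * π * g⁻¹) (g x) = signedWord ε f π x := by
  unfold signedWord
  congr 1
  funext k
  rw [conj_pow_apply, hg]

/-- Colour words are periodic, so they are determined by their shifts. -/
theorem colorWord_injective_shift {x y : Fin n}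
    (h : colorWord f π (π x) = colorWord f π (π y)) : colorWord f π x = colorWord f π y := by
  have h' := colorWord_pow_congr h (orderOf π - 1)
  have e : ∀ z, (π ^ (orderOf π - 1)) (π z) = z := fun z => by
    rw [← Perm.mul_apply, ← pow_succ, Nat.sub_add_cancel (orderOf_pos π), pow_orderOf_eq_one,
      Perm.one_apply]
  rwa [e, e] at h'

/-- A conjugate of `π` by a colour preserving permutation that is also monotone on the fibres of
`f` is equal to `π`. -/
theorem FiberMono.eq_of_conj (hf : Monotone f) {g : Perm (Fin n)} (hg : ∀ x, f (g x) = f x)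
    (hπ : FiberMono ε f π) (hπ' : FiberMono ε f (g * π * g⁻¹)) : g * π * g⁻¹ = π := by
  have hcomp : signedWord ε f (g * π * g⁻¹) ∘ g = signedWord ε f π :=
    funext fun x => signedWord_conj hg x
  obtain ⟨π', hπ'eq⟩ : ∃ π', π' = g * π * g⁻¹ := ⟨_, rfl⟩
  rw [← hπ'eq] at hπ' hcomp ⊢
  have hmono := hπ.monotone_signedWord hf
  have hsw : signedWord ε f π = signedWord ε f π' := by
    rw [← hcomp] at hmono ⊢
    exact Tuple.unique_monotone (τ := 1) hmono (by simpa using hπ'.monotone_signedWord hf)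
  have hw : ∀ x, colorWord f π x = colorWord f π' x := by
    intro x
    have h := congrFun hsw x
    unfold signedWord at h
    rw [toLex_inj, funext_iff] at h
    funext k
    exact mul_left_cancel₀ (Units.ne_zero (ε ^ k)) (h k)
  have hτ : ∀ x, colorWord f π ((π'⁻¹ * π) x) = colorWord f π x := by
    intro x
    rw [hw, hw]
    refine colorWord_injective_shift ?_
    rw [Perm.mul_apply, Perm.inv_def, Equiv.apply_symm_apply, ← hw]
    funext k
    have h1 := colorWord_pow_apply (f := f) (π := π) x 1 k
    have h2 := colorWord_pow_apply (f := f) (π := π') x 1 k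
    rw [pow_one] at h1 h2
    rw [h1, h2, hw]
  have key : ∀ x, (π'⁻¹ * π) x = x := by
    intro x
    refine apply_eq_self_of_strictMonoOn (S := {y | colorWord f π y = colorWord f π x}) ?_ ?_ rfl
    · intro y hy
      exact (hτ y).trans hy
    · intro y hy z hz hyz
      have hyz' : colorWord f π y = colorWord f π z := hy.trans hz.symm
      have h1 := hπ y z hyz (congrFun hyz' 0)
      by_contra hc
      rcases (not_lt.1 hc).eq_or_lt with e | hlt
      · exact hyz.ne ((π'⁻¹ * π).injective e).symm
      · have h2 := hπ' _ _ hlt (congrFun ((hτ z).trans (hyz'.symm.trans (hτ y).symm)) 0)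
        simp only [Perm.mul_apply, Perm.inv_def, Equiv.apply_symm_apply] at h2
        exact lt_asymm h1 h2
  ext x
  have := key x
  rw [Perm.mul_apply, Perm.inv_eq_iff_eq] at this
  rw [this]

end Words

section CycleLength

variable {n : ℕ} {π : Perm (Fin n)}

theorem pow_apply_eq_self_iff_orderOf_cycleOf_dvd (x : Fin n) (k : ℕ) :
    (π ^ k) x = x ↔ orderOf (π.cycleOf x) ∣ k := by
  rw [orderOf_dvd_iff_pow_eq_one, ← Perm.cycleOf_pow_apply_self]
  by_cases hx : π x = x
  · simp [(Perm.cycleOf_eq_one_iff π).2 hx]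
  · rw [(Perm.isCycle_cycleOf π hx).pow_eq_one_iff' (x := x) (by simpa using hx)]

theorem orderOf_cycleOf_mem_parts_partition (x : Fin n) :
    orderOf (π.cycleOf x) ∈ π.partition.parts := by
  rw [Perm.parts_partition, Multiset.mem_add]
  by_cases hx : π x = x
  · right
    rw [(Perm.cycleOf_eq_one_iff π).2 hx, orderOf_one, Multiset.mem_replicate]
    refine ⟨?_, rfl⟩
    have : π.support.card < Fintype.card (Fin n) :=
      Finset.card_lt_univ_of_notMem (x := x) (by simpa using hx)
    omega
  · left
    rw [(Perm.isCycle_cycleOf π hx).orderOf, Perm.cycleType_def, Multiset.mem_map]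
    exact ⟨_, Perm.cycleOf_mem_cycleFactorsFinset_iff.2 (Perm.mem_support.2 hx), rfl⟩

theorem two_le_count_parts_partition {x y : Fin n} (hxy : ¬ π.SameCycle x y)
    (h : orderOf (π.cycleOf x) = orderOf (π.cycleOf y)) :
    2 ≤ π.partition.parts.count (orderOf (π.cycleOf x)) := by
  have hne : x ≠ y := fun e => hxy (e ▸ Perm.SameCycle.refl π x)
  rw [Perm.parts_partition, Multiset.count_add]
  have hfix : ∀ z, π z = z ↔ orderOf (π.cycleOf z) = 1 := fun z => by
    rw [orderOf_eq_one_iff, Perm.cycleOf_eq_one_iff]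
  by_cases hx : π x = x
  · have hy : π y = y := by rw [hfix, ← h, ← hfix]; exact hx
    rw [(hfix x).1 hx, Multiset.count_replicate_self]
    have h1 : ({x, y} : Finset (Fin n)) ⊆ π.supportᶜ := by
      intro z hz
      rcases Finset.mem_insert.1 hz with rfl | hz
      · simpa using hx
      · rw [Finset.mem_singleton.1 hz]; simpa using hy
    have h2 := Finset.card_le_card h1
    rw [Finset.card_pair hne, Finset.card_compl] at h2
    omega
  · have hy : π y ≠ y := by rw [Ne, hfix, ← h, ← hfix]; exact hx
    have hcx := Perm.cycleOf_mem_cycleFactorsFinset_iff.2 (Perm.mem_support.2 hx)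
    have hcy := Perm.cycleOf_mem_cycleFactorsFinset_iff.2 (Perm.mem_support.2 hy)
    have hc : π.cycleOf x ≠ π.cycleOf y := fun e =>
      hxy ((Perm.sameCycle_iff_cycleOf_eq_of_mem_support (Perm.mem_support.2 hx)
        (Perm.mem_support.2 hy)).2 e)
    refine le_trans ?_ (Nat.le_add_right _ _)
    rw [Perm.cycleType_def, Multiset.count_map]
    have h1 : ({π.cycleOf x, π.cycleOf y} : Finset (Perm (Fin n))) ⊆
        π.cycleFactorsFinset.filter
          fun c => orderOf (π.cycleOf x) = (Finset.card ∘ Perm.support) c := by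
      intro c hc
      rw [Finset.mem_filter]
      rcases Finset.mem_insert.1 hc with rfl | hc
      · exact ⟨hcx, (Perm.isCycle_cycleOf π hx).orderOf⟩
      · rw [Finset.mem_singleton.1 hc, h]
        exact ⟨hcy, (Perm.isCycle_cycleOf π hy).orderOf⟩
    have h2 := Finset.card_le_card h1
    rw [Finset.card_pair hc] at h2
    exact h2

/-- If no cycle length is `2` modulo `4`, odd powers have no points of period exactly `2`. -/
theorem pow_apply_eq_self_of_pow_two_mul (h : ∀ p ∈ π.partition.parts, ¬ p ≡ 2 [MOD 4])
    (x : Fin n) (k : ℕ) (hk : Odd k) (hx : (π ^ (2 * k)) x = x) : (π ^ k) x = x := by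
  rw [pow_apply_eq_self_iff_orderOf_cycleOf_dvd] at hx ⊢
  have hd := h _ (orderOf_cycleOf_mem_parts_partition (π := π) x)
  generalize orderOf (π.cycleOf x) = d at hx hd
  rcases Nat.even_or_odd d with he | ho
  · exfalso
    obtain ⟨m, rfl⟩ := he
    obtain ⟨c, hc⟩ := hx
    have hmc : k = m * c := by nlinarith
    rw [hmc, Nat.odd_mul] at hk
    obtain ⟨⟨a, rfl⟩, -⟩ := hk
    apply hd
    unfold Nat.ModEq
    omega
  · exact (Nat.Coprime.dvd_of_dvd_mul_left (Nat.coprime_two_right.2 ho) hx)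

theorem even_of_pow_apply_eq_self
    (h : ∀ p ∈ π.partition.parts, Odd p → π.partition.parts.count p = 1)
    {x y : Fin n} (hxy : ¬ π.SameCycle x y) (hper : ∀ k : ℕ, (π ^ k) x = x ↔ (π ^ k) y = y)
    {k : ℕ} (hk : (π ^ k) x = x) : Even k := by
  have he : orderOf (π.cycleOf x) = orderOf (π.cycleOf y) := by
    simp only [pow_apply_eq_self_iff_orderOf_cycleOf_dvd] at hper
    exact Nat.dvd_antisymm ((hper _).2 dvd_rfl) ((hper _).1 dvd_rfl)
  have h2 := two_le_count_parts_partition hxy he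
  have hnodd : ¬ Odd (orderOf (π.cycleOf x)) := fun ho => by
    have := h _ (orderOf_cycleOf_mem_parts_partition x) ho
    omega
  rw [pow_apply_eq_self_iff_orderOf_cycleOf_dvd] at hk
  exact (Nat.not_odd_iff_even.1 hnodd).trans_dvd hk

end CycleLength

section Existence

variable {n : ℕ} {ε : ℤˣ} {f : Fin n → ℤ} {π : Perm (Fin n)}

theorem Int.units_pow_eq_of_even_iff (ε : ℤˣ) {a b : ℕ} (h : Even a ↔ Even b) :
    ε ^ a = ε ^ b := by
  rcases Int.units_eq_one_or ε with rfl | rfl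
  · simp
  · rcases Nat.even_or_odd a with ha | ha
    · rw [ha.neg_one_pow, (h.1 ha).neg_one_pow]
    · rw [ha.neg_one_pow, Odd.neg_one_pow]
      rw [← Nat.not_even_iff_odd] at ha ⊢
      rwa [← h]

theorem even_iff_of_pow_apply_eq {x : Fin n} (hx : ∀ k : ℕ, (π ^ k) x = x → Even k) {a b : ℕ}
    (h : (π ^ a) x = (π ^ b) x) : Even a ↔ Even b := by
  wlog hab : a ≤ b generalizing a b
  · exact (this h.symm (le_of_not_ge hab)).symm
  obtain ⟨c, rfl⟩ := Nat.exists_eq_add_of_le hab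
  rw [pow_add, Perm.mul_apply] at h
  have := hx c ((π ^ a).injective h).symm
  rw [Nat.even_add]
  simp [this]

/-- In a primitive permutation, two points with the same colour word and in the same cycle agree. -/
theorem IsPrimitive.eq_of_sameCycle (h : IsPrimitive f π) {x y : Fin n}
    (hw : colorWord f π x = colorWord f π y) (hc : π.SameCycle x y) : x = y := by
  obtain ⟨k, rfl⟩ := hc.exists_nat_pow_eq
  exact (h x k hw.symm).symm

theorem IsPrimitive.pow_apply_eq (h : IsPrimitive f π) {x : Fin n} {a b : ℕ}
    (hw : colorWord f π ((π ^ a) x) = colorWord f π ((π ^ b) x)) : (π ^ a) x = (π ^ b) x :=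
  h.eq_of_sameCycle hw (by simp [Perm.SameCycle.refl])

theorem IsPrimitive.pow_apply_eq_self_iff (h : IsPrimitive f π) {x y : Fin n}
    (hw : colorWord f π x = colorWord f π y) (k : ℕ) : (π ^ k) x = x ↔ (π ^ k) y = y := by
  have hk := colorWord_pow_congr hw k
  constructor
  · intro hx
    exact h y k (by rw [← hk, hx, hw])
  · intro hy
    exact h x k (by rw [hk, hy, hw])

/-- A sign for each point that depends only on its colour word and is multiplied by `ε` by `π`,
at least on the points whose colour word is shared. -/
theorem IsPrimitive.exists_sign (h : IsPrimitive f π)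
    (hε : ε = 1 ∨ ∀ x y, ¬ π.SameCycle x y → (∀ k : ℕ, (π ^ k) x = x ↔ (π ^ k) y = y) →
      ∀ k : ℕ, (π ^ k) x = x → Even k) :
    ∃ t : Fin n → ℤˣ, ∀ x y, x ≠ y → colorWord f π x = colorWord f π y →
      t x = t y ∧ t (π x) = ε * t x := by
  rcases hε with rfl | hε
  · exact ⟨fun _ => 1, by simp⟩
  let Q : Fin n → Set (ℕ → ℤ) := fun x => {w | ∃ k : ℕ, colorWord f π ((π ^ k) x) = w}
  have hQ : ∀ x, ∃ k : ℕ, colorWord f π ((π ^ k) x) = Classical.epsilon (· ∈ Q x) := fun x =>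
    Classical.epsilon_spec (p := (· ∈ Q x)) ⟨_, 0, rfl⟩
  choose κ hκ using hQ
  have hQπ : ∀ x, Q (π x) = Q x := by
    intro x
    ext w
    constructor
    · rintro ⟨k, hk⟩
      exact ⟨k + 1, by rwa [pow_succ, Perm.mul_apply]⟩
    · rintro ⟨k, hk⟩
      refine ⟨k + (orderOf π - 1), ?_⟩
      rwa [← Perm.mul_apply, ← pow_succ, add_assoc, Nat.sub_add_cancel (orderOf_pos π), pow_add,
        pow_orderOf_eq_one, mul_one]
  refine ⟨fun x => ε ^ κ x, fun x y hne hw => ?_⟩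
  have heven : ∀ k : ℕ, (π ^ k) x = x → Even k :=
    hε x y (fun hc => hne (h.eq_of_sameCycle hw hc)) (h.pow_apply_eq_self_iff hw)
  have hQxy : Q x = Q y := by
    ext w
    simp only [Q, Set.mem_ofPred_eq, colorWord_pow_congr hw]
  constructor
  · refine Int.units_pow_eq_of_even_iff ε (even_iff_of_pow_apply_eq heven (h.pow_apply_eq ?_))
    rw [hκ x, colorWord_pow_congr hw, hκ y, hQxy]
  · have hpi := hκ (π x)
    rw [hQπ, ← hκ x, ← Perm.mul_apply, ← pow_succ] at hpi
    have := Int.units_pow_eq_of_even_iff ε (even_iff_of_pow_apply_eq heven (h.pow_apply_eq hpi))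
    change ε ^ κ (π x) = ε * ε ^ κ x
    rw [← this, pow_succ', ← mul_assoc, ← sq, Int.units_sq, one_mul]

theorem signedWord_apply_lt {x y : Fin n} (hf : f x = f y)
    (h : signedWord ε f π x < signedWord ε f π y) :
    (ε = 1 → signedWord ε f π (π x) < signedWord ε f π (π y)) ∧
      (ε = -1 → signedWord ε f π (π y) < signedWord ε f π (π x)) := by
  obtain ⟨i, h1, h2⟩ := signedWord_lt_iff.1 h
  rcases i with _ | i
  · simp [hf] at h2
  have e : ∀ (j : ℕ) (z : Fin n), (π ^ j) (π z) = (π ^ (j + 1)) z := fun j z => by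
    rw [pow_succ, Perm.mul_apply]
  constructor
  · rintro rfl
    refine signedWord_lt_iff.2 ⟨i, fun j hj => ?_, ?_⟩
    · rw [e, e]; exact h1 _ (by omega)
    · rw [e, e]; simpa using h2
  · rintro rfl
    refine signedWord_lt_iff.2 ⟨i, fun j hj => ?_, ?_⟩
    · rw [e, e]; exact (h1 _ (by omega)).symm
    · rw [e, e]
      rw [pow_succ, Units.val_mul, Units.val_neg, Units.val_one] at h2
      linarith

/-- A primitive permutation is conjugate to one that is monotone on the fibres of `f`, by a
colour preserving permutation. -/
theorem IsPrimitive.exists_conj_fiberMono (hf : Monotone f) (h : IsPrimitive f π)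
    (hε : ε = 1 ∨ ∀ x y, ¬ π.SameCycle x y → (∀ k : ℕ, (π ^ k) x = x ↔ (π ^ k) y = y) →
      ∀ k : ℕ, (π ^ k) x = x → Even k) :
    ∃ g : Perm (Fin n), (∀ x, f (g x) = f x) ∧ FiberMono ε f (g * π * g⁻¹) := by
  obtain ⟨t, ht⟩ := h.exists_sign hε
  let rep : Fin n → Fin n := fun x => (Quotient.mk (Perm.SameCycle.setoid π) x).out
  have hrep : ∀ x y, rep x = rep y → π.SameCycle x y := fun x y hxy =>
    Quotient.exact (Quotient.out_injective hxy)
  have hrepπ : ∀ x, rep (π x) = rep x := fun x => by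
    have : Quotient.mk (Perm.SameCycle.setoid π) (π x) = Quotient.mk _ x :=
      Quotient.sound (Perm.sameCycle_apply_left.2 (Perm.SameCycle.refl π x))
    simp only [rep, this]
  let tie : Fin n → ℤ := fun x => (t x : ℤ) * (rep x : ℕ)
  let K : Fin n → Lex (ℕ → ℤ) ×ₗ ℤ := fun x => toLex (signedWord ε f π x, tie x)
  have hKinj : Function.Injective K := by
    intro x y hxy
    by_contra hne
    have hK := Prod.ext_iff.1 (toLex_inj.1 hxy)
    have hw := signedWord_eq_iff.1 hK.1
    have htie : tie x = tie y := hK.2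
    simp only [tie, (ht x y hne hw).1] at htie
    have := mul_left_cancel₀ (Units.ne_zero (t y)) htie
    exact hne (h.eq_of_sameCycle hw (hrep x y (Fin.ext (by exact_mod_cast this))))
  have hKlt : ∀ x y, K x < K y ↔ signedWord ε f π x < signedWord ε f π y ∨
      signedWord ε f π x = signedWord ε f π y ∧ tie x < tie y := fun x y => Prod.lex_def
  have hKf : ∀ x y, K x ≤ K y → f x ≤ f y := by
    intro x y hxy
    rcases hxy.eq_or_lt with e | hlt
    · rw [hKinj e]
    rcases (hKlt x y).1 hlt with hlt | ⟨heq, -⟩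
    · obtain ⟨i, h1, h2⟩ := signedWord_lt_iff.1 hlt
      rcases i with _ | i
      · simpa using h2.le
      · exact (h1 0 (by omega)).le
    · exact (congrFun (signedWord_eq_iff.1 heq) 0).le
  have hKπ : ∀ x y, f x = f y → K x < K y →
      (ε = 1 → K (π x) < K (π y)) ∧ (ε = -1 → K (π y) < K (π x)) := by
    intro x y hfxy hlt
    have hne : x ≠ y := fun e => by simp [e] at hlt
    rw [hKlt, hKlt]
    rcases (hKlt x y).1 hlt with hlt | ⟨heq, htie⟩
    · have := signedWord_apply_lt hfxy hlt
      exact ⟨fun e => Or.inl (this.1 e), fun e => Or.inl (this.2 e)⟩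
    · have hw := signedWord_eq_iff.1 heq
      have hw' : signedWord ε f π (π x) = signedWord ε f π (π y) := by
        rw [signedWord_eq_iff]; simpa using colorWord_pow_congr hw 1
      have htx : tie (π x) = ε * tie x := by
        simp only [tie, hrepπ, (ht x y hne hw).2, Units.val_mul, mul_assoc]
      have hty : tie (π y) = ε * tie y := by
        simp only [tie, hrepπ, (ht y x hne.symm hw.symm).2, Units.val_mul, mul_assoc]
      constructor
      · rintro rfl
        exact Or.inr ⟨hw', by simpa [htx, hty] using htie⟩
      · rintro rfl
        exact Or.inr ⟨hw'.symm, by simpa [htx, hty] using htie⟩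
  let σ := Tuple.sort K
  have hσ : StrictMono (K ∘ σ) :=
    (Tuple.monotone_sort K).strictMono_of_injective (hKinj.comp σ.injective)
  have hfσ : f ∘ σ = f :=
    Tuple.unique_monotone (f := f) (σ := σ) (τ := 1)
      (fun x y hxy => hKf _ _ (hσ.monotone hxy)) (by simpa using hf)
  have hinv : ∀ a b, K a < K b → σ⁻¹ a < σ⁻¹ b := by
    intro a b hab
    rw [← hσ.lt_iff_lt]
    simpa using hab
  refine ⟨σ⁻¹, fun x => ?_, fun x y hxy hfxy => ?_⟩
  · have := congrFun hfσ (σ⁻¹ x)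
    simpa using this.symm
  · have := hKπ (σ x) (σ y) (by simpa using (congrFun hfσ x).trans (hfxy.trans
      (congrFun hfσ y).symm)) (hσ hxy)
    rw [inv_inv]
    simp only [Perm.mul_apply]
    rcases Int.units_eq_one_or ε with e | e
    · have := hinv _ _ (this.1 e)
      rw [e]
      simpa using this
    · have := hinv _ _ (this.2 e)
      rw [e]
      simpa using this

end Existence

section DescentSets

/-- The descent set (for `ε = 1`) or ascent set (for `ε = -1`) of `π`. -/
def desSet (n : ℕ) (ε : ℤˣ) (π : Perm (Fin n)) : Finset ℕ :=
  (Finset.Icc 1 (n - 1)).filter fun i =>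
    (ε : ℤ) * oneLine n π i > (ε : ℤ) * oneLine n π (i + 1)

/-- The index of the block containing `x` when `[n]` is cut after each element of `D`. -/
def blockIndex (n : ℕ) (D : Finset ℕ) (x : Fin n) : ℤ :=
  ((D.filter fun d => d ≤ x.val).card : ℤ)

/-- The number of indices `2 ≤ i ≤ n - 1` with `i - 1 ∉ D` and `i ∈ D`. -/
def peakCount (n : ℕ) (D : Finset ℕ) : ℕ :=
  ((Finset.Icc 2 (n - 1)).filter fun i => i - 1 ∉ D ∧ i ∈ D).card

variable {n : ℕ} {ε : ℤˣ} {π : Perm (Fin n)}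

theorem oneLine_succ (x : Fin n) : oneLine n π (x.val + 1) = (π x).val + 1 := by
  have h : 1 ≤ x.val + 1 ∧ x.val + 1 ≤ n := ⟨by omega, x.isLt⟩
  rw [oneLine, dif_pos h]
  rfl

theorem oneLine_ne {a b : ℕ} (ha : 1 ≤ a ∧ a ≤ n) (hb : 1 ≤ b ∧ b ≤ n) (hab : a ≠ b) :
    oneLine n π a ≠ oneLine n π b := by
  rw [oneLine, oneLine, dif_pos ha, dif_pos hb]
  intro h
  have := π.injective (Fin.ext (Nat.succ_injective h))
  simp only [Fin.mk.injEq] at this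
  omega

theorem monotone_blockIndex (D : Finset ℕ) : Monotone (blockIndex n D) := by
  intro x y hxy
  unfold blockIndex
  have : (D.filter fun d => d ≤ x.val) ⊆ D.filter fun d => d ≤ y.val := by
    intro d hd
    rw [Finset.mem_filter] at hd ⊢
    exact ⟨hd.1, hd.2.trans hxy⟩
  exact_mod_cast Finset.card_le_card this

theorem blockIndex_eq_iff {D : Finset ℕ} {x y : Fin n} (hxy : x ≤ y) :
    blockIndex n D x = blockIndex n D y ↔ ∀ d ∈ D, d ≤ y.val → d ≤ x.val := by
  have hsub : (D.filter fun d => d ≤ x.val) ⊆ D.filter fun d => d ≤ y.val := by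
    intro d hd
    rw [Finset.mem_filter] at hd ⊢
    exact ⟨hd.1, hd.2.trans hxy⟩
  unfold blockIndex
  rw [Nat.cast_inj]
  constructor
  · intro h d hd hdy
    have : d ∈ D.filter fun d => d ≤ x.val := by
      rw [Finset.eq_of_subset_of_card_le hsub h.ge]
      exact Finset.mem_filter.2 ⟨hd, hdy⟩
    exact (Finset.mem_filter.1 this).2
  · intro h
    congr 1
    refine hsub.antisymm fun d hd => ?_
    rw [Finset.mem_filter] at hd ⊢
    exact ⟨hd.1, h d hd.1 hd.2⟩

theorem fiberMono_blockIndex_iff (D : Finset ℕ) :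
    FiberMono ε (blockIndex n D) π ↔ desSet n ε π ⊆ D := by
  constructor
  · intro h i hi
    obtain ⟨hi, hlt⟩ := Finset.mem_filter.1 hi
    rw [Finset.mem_Icc] at hi
    by_contra hD
    obtain ⟨i, rfl⟩ := Nat.exists_eq_add_of_le' hi.1
    have h1 := h ⟨i, by omega⟩ ⟨i + 1, by omega⟩ (by simp) ?_
    · have e1 := oneLine_succ (π := π) ⟨i, by omega⟩
      have e2 := oneLine_succ (π := π) ⟨i + 1, by omega⟩
      simp only at e1 e2
      rw [e1, e2] at hlt
      push_cast at hlt
      linarith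
    · rw [blockIndex_eq_iff (by simp)]
      intro d hd hle
      have : d ≠ i + 1 := fun e => hD (e ▸ hd)
      simp only at hle ⊢
      omega
  · intro h x y hxy hf
    rw [blockIndex_eq_iff hxy.le] at hf
    have hstep : ∀ i, x.val + 1 ≤ i → i ≤ y.val →
        (ε : ℤ) * oneLine n π i < (ε : ℤ) * oneLine n π (i + 1) := by
      intro i hxi hiy
      have hiD : i ∉ D := fun hi => by have := hf i hi hiy; omega
      have hi : i ∉ desSet n ε π := fun hi => hiD (h hi)
      simp only [desSet, Finset.mem_filter, Finset.mem_Icc, not_and] at hi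
      have := hi ⟨by omega, by omega⟩
      refine lt_of_le_of_ne (not_lt.1 this) fun e => ?_
      have e := mul_left_cancel₀ (Units.ne_zero ε) e
      exact oneLine_ne (π := π) (a := i) (b := i + 1) ⟨by omega, by omega⟩ ⟨by omega, by omega⟩
        (by omega) (by exact_mod_cast e)
    have hall : ∀ m, x.val + 1 ≤ m → m ≤ y.val →
        (ε : ℤ) * oneLine n π (x.val + 1) < (ε : ℤ) * oneLine n π (m + 1) := by
      intro m hm
      induction m, hm using Nat.le_induction with
      | base => exact fun hy => hstep _ le_rfl hy
      | succ m hm ih => exact fun hy => (ih (by omega)).trans (hstep _ (by omega) hy)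
    have := hall y.val hxy le_rfl
    rw [oneLine_succ, oneLine_succ] at this
    push_cast at this
    linarith

theorem pk_eq_peakCount (π : Perm (Fin n)) : pk n π = peakCount n (desSet n 1 π) := by
  unfold pk peakCount
  congr 1
  refine Finset.filter_congr fun i hi => ?_
  rw [Finset.mem_Icc] at hi
  have hne := oneLine_ne (π := π) (a := i - 1) (b := i) ⟨by omega, by omega⟩
    ⟨by omega, by omega⟩ (by omega)
  have e : i - 1 + 1 = i := by omega
  simp only [desSet, Finset.mem_filter, Finset.mem_Icc, Units.val_one, one_mul, gt_iff_lt,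
    Nat.cast_lt, e]
  omega

theorem des_eq_card_desSet (π : Perm (Fin n)) : des n π = (desSet n 1 π).card := by
  simp [des, desSet]

theorem oneLine_revPerm_conj {i : ℕ} (h1 : 1 ≤ i) (h2 : i ≤ n) :
    oneLine n (Fin.revPerm * π * Fin.revPerm⁻¹) i + oneLine n π (n + 1 - i) = n + 1 := by
  obtain ⟨m, rfl⟩ := Nat.exists_eq_add_of_le' h1
  have e1 := oneLine_succ (π := Fin.revPerm * π * Fin.revPerm⁻¹) ⟨m, by omega⟩
  have e2 := oneLine_succ (π := π) (Fin.rev ⟨m, by omega⟩)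
  have e3 : (Fin.rev (⟨m, by omega⟩ : Fin n)).val + 1 = n + 1 - (m + 1) := by
    rw [Fin.val_rev]; simp only; omega
  rw [e3] at e2
  have e4 : (Fin.revPerm * π * Fin.revPerm⁻¹ : Perm (Fin n)) ⟨m, by omega⟩
      = Fin.rev (π (Fin.rev ⟨m, by omega⟩)) := by
    simp [Perm.mul_apply, Perm.inv_def]
  rw [e4, Fin.val_rev] at e1
  simp only at e1
  have := (π (Fin.rev ⟨m, by omega⟩)).isLt
  omega

theorem mem_desSet_neg_one {i : ℕ} :
    i ∈ desSet n (-1) π ↔ (1 ≤ i ∧ i ≤ n - 1) ∧ oneLine n π i < oneLine n π (i + 1) := by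
  simp [desSet]

theorem pk_revPerm_conj (π : Perm (Fin n)) :
    pk n (Fin.revPerm * π * Fin.revPerm⁻¹) = peakCount n (desSet n (-1) π) := by
  unfold pk peakCount
  refine Finset.card_nbij' (fun i => n + 1 - i) (fun i => n + 1 - i) ?_ ?_ ?_ ?_
  · intro i hi
    simp only [Finset.coe_filter, Finset.mem_Icc, Set.mem_ofPred_eq, mem_desSet_neg_one] at hi ⊢
    obtain ⟨hi, h1, h2⟩ := hi
    have r0 := oneLine_revPerm_conj (π := π) (i := i - 1) (by omega) (by omega)
    have r1 := oneLine_revPerm_conj (π := π) (i := i) (by omega) (by omega)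
    have r2 := oneLine_revPerm_conj (π := π) (i := i + 1) (by omega) (by omega)
    rw [show n + 1 - (i - 1) = n + 1 - i + 1 by omega] at r0
    rw [show n + 1 - (i + 1) = n + 1 - i - 1 by omega] at r2
    rw [show n + 1 - i - 1 + 1 = n + 1 - i by omega]
    omega
  · intro i hi
    simp only [Finset.coe_filter, Finset.mem_Icc, Set.mem_ofPred_eq, mem_desSet_neg_one] at hi ⊢
    obtain ⟨hi, h1, h2⟩ := hi
    have hne := oneLine_ne (π := π) (a := i - 1) (b := i) ⟨by omega, by omega⟩
      ⟨by omega, by omega⟩ (by omega)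
    have r0 := oneLine_revPerm_conj (π := π) (i := n + 1 - i - 1) (by omega) (by omega)
    have r1 := oneLine_revPerm_conj (π := π) (i := n + 1 - i) (by omega) (by omega)
    have r2 := oneLine_revPerm_conj (π := π) (i := n + 1 - i + 1) (by omega) (by omega)
    rw [show n + 1 - (n + 1 - i - 1) = i + 1 by omega] at r0
    rw [show n + 1 - (n + 1 - i) = i by omega] at r1
    rw [show n + 1 - (n + 1 - i + 1) = i - 1 by omega] at r2
    rw [show i - 1 + 1 = i by omega] at h1
    omega
  · intro i hi
    simp only [Finset.coe_filter, Finset.mem_Icc, Set.mem_ofPred_eq] at hi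
    simp only
    omega
  · intro i hi
    simp only [Finset.coe_filter, Finset.mem_Icc, Set.mem_ofPred_eq] at hi
    simp only
    omega

theorem des_revPerm_conj (π : Perm (Fin n)) :
    des n (Fin.revPerm * π * Fin.revPerm⁻¹) = des n π := by
  unfold des
  refine Finset.card_nbij' (fun i => n - i) (fun i => n - i) ?_ ?_ ?_ ?_
  · intro i hi
    simp only [Finset.coe_filter, Finset.mem_Icc, Set.mem_ofPred_eq] at hi ⊢
    have r1 := oneLine_revPerm_conj (π := π) (i := i) (by omega) (by omega)
    have r2 := oneLine_revPerm_conj (π := π) (i := i + 1) (by omega) (by omega)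
    rw [show n + 1 - i = n - i + 1 by omega] at r1
    rw [show n + 1 - (i + 1) = n - i by omega] at r2
    omega
  · intro i hi
    simp only [Finset.coe_filter, Finset.mem_Icc, Set.mem_ofPred_eq] at hi ⊢
    have r1 := oneLine_revPerm_conj (π := π) (i := n - i) (by omega) (by omega)
    have r2 := oneLine_revPerm_conj (π := π) (i := n - i + 1) (by omega) (by omega)
    rw [show n + 1 - (n - i) = i + 1 by omega] at r1
    rw [show n + 1 - (n - i + 1) = i by omega] at r2
    omega
  · intro i hi
    simp only [Finset.coe_filter, Finset.mem_Icc, Set.mem_ofPred_eq] at hi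
    simp only
    omega
  · intro i hi
    simp only [Finset.coe_filter, Finset.mem_Icc, Set.mem_ofPred_eq] at hi
    simp only
    omega

theorem des_add_card_desSet_neg_one (π : Perm (Fin n)) :
    des n π + (desSet n (-1) π).card = n - 1 := by
  have h := Finset.card_filter_add_card_filter_not (s := Finset.Icc 1 (n - 1))
    (fun i => oneLine n π i > oneLine n π (i + 1))
  rw [Nat.card_Icc, Nat.add_sub_cancel] at h
  rw [← h, des]
  congr 2
  ext i
  rw [mem_desSet_neg_one, Finset.mem_filter, Finset.mem_Icc]
  refine and_congr_right fun hi => ?_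
  have := oneLine_ne (π := π) (a := i) (b := i + 1) ⟨by omega, by omega⟩
    ⟨by omega, by omega⟩ (by omega)
  omega

end DescentSets

section Counting

variable {n : ℕ} {parts : Multiset ℕ}

theorem card_fiberMono_le (h2mod4 : ∀ p ∈ parts, ¬ p ≡ 2 [MOD 4])
    (hodd : ∀ p ∈ parts, Odd p → parts.count p = 1) {f : Fin n → ℤ} (hf : Monotone f)
    (ε ε' : ℤˣ) :
    Nat.card {π : Perm (Fin n) // π.partition.parts = parts ∧ FiberMono ε f π} ≤
      Nat.card {π : Perm (Fin n) // π.partition.parts = parts ∧ FiberMono ε' f π} := by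
  have hex : ∀ π : {π : Perm (Fin n) // π.partition.parts = parts ∧ FiberMono ε f π},
      ∃ g : Perm (Fin n), (∀ x, f (g x) = f x) ∧ FiberMono ε' f (g * π * g⁻¹) := by
    rintro ⟨π, hπ, hmono⟩
    subst hπ
    have hprim := hmono.isPrimitive (Or.inr (pow_apply_eq_self_of_pow_two_mul h2mod4))
    exact hprim.exists_conj_fiberMono hf
      (Or.inr fun x y hxy hper k hk => even_of_pow_apply_eq_self hodd hxy hper hk)
  choose g hg hmono using hex
  refine Nat.card_le_card_of_injective
    (fun π => ⟨g π * π * (g π)⁻¹, ?_, hmono π⟩) ?_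
  · rw [← Perm.partition_eq_of_isConj.1 (isConj_iff.2 ⟨g π, rfl⟩)]
    exact π.2.1
  · intro π₁ π₂ h
    have h : g π₁ * π₁ * (g π₁)⁻¹ = g π₂ * π₂ * (g π₂)⁻¹ := congrArg Subtype.val h
    have e : (π₂ : Perm (Fin n)) = ((g π₂)⁻¹ * g π₁) * π₁ * ((g π₂)⁻¹ * g π₁)⁻¹ := by
      have : (π₂ : Perm (Fin n)) = (g π₂)⁻¹ * (g π₂ * π₂ * (g π₂)⁻¹) * g π₂ := by group
      rw [this, ← h]
      group
    have hgg : ∀ x, f (((g π₂)⁻¹ * g π₁) x) = f x := by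
      intro x
      rw [← hg π₂, Perm.mul_apply, Perm.inv_def, Equiv.apply_symm_apply, hg]
    have h2 := π₂.2.2
    rw [e] at h2
    exact Subtype.ext ((π₁.2.2.eq_of_conj hf hgg h2).symm.trans e.symm)

open Classical in
theorem card_desSet_subset_eq (h2mod4 : ∀ p ∈ parts, ¬ p ≡ 2 [MOD 4])
    (hodd : ∀ p ∈ parts, Odd p → parts.count p = 1) (D : Finset ℕ) (ε ε' : ℤˣ) :
    (Finset.univ.filter fun π : Perm (Fin n) =>
        π.partition.parts = parts ∧ desSet n ε π ⊆ D).card =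
      (Finset.univ.filter fun π : Perm (Fin n) =>
        π.partition.parts = parts ∧ desSet n ε' π ⊆ D).card := by
  have hf := monotone_blockIndex (n := n) D
  have := le_antisymm (card_fiberMono_le h2mod4 hodd hf ε ε')
    (card_fiberMono_le h2mod4 hodd hf ε' ε)
  simpa only [fiberMono_blockIndex_iff, Nat.card_eq_fintype_card, Fintype.card_subtype] using this

open Classical in
theorem card_filter_desSet_eq_sum (T : Finset (Finset ℕ)) (ε : ℤˣ) :
    (Finset.univ.filter fun π : Perm (Fin n) =>
        π.partition.parts = parts ∧ desSet n ε π ∈ T).card =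
      ∑ E ∈ T, (Finset.univ.filter fun π : Perm (Fin n) =>
        π.partition.parts = parts ∧ desSet n ε π = E).card := by
  rw [Finset.card_eq_sum_card_fiberwise (f := desSet n ε) (t := T)]
  · refine Finset.sum_congr rfl fun E hE => ?_
    rw [Finset.filter_filter]
    congr 1
    refine Finset.filter_congr fun π _ => ?_
    constructor
    · rintro ⟨⟨h1, -⟩, h2⟩
      exact ⟨h1, h2⟩
    · rintro ⟨h1, h2⟩
      exact ⟨⟨h1, h2 ▸ hE⟩, h2⟩
  · intro π hπ
    exact (Finset.mem_filter.1 hπ).2.2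

open Classical in
/-- For these cycle types, descent sets and ascent sets are equidistributed. -/
theorem card_desSet_eq (h2mod4 : ∀ p ∈ parts, ¬ p ≡ 2 [MOD 4])
    (hodd : ∀ p ∈ parts, Odd p → parts.count p = 1) (ε ε' : ℤˣ) (D : Finset ℕ) :
    (Finset.univ.filter fun π : Perm (Fin n) =>
        π.partition.parts = parts ∧ desSet n ε π = D).card =
      (Finset.univ.filter fun π : Perm (Fin n) =>
        π.partition.parts = parts ∧ desSet n ε' π = D).card := by
  induction D using Finset.strongInduction with
  | H D ih =>
    have h := card_desSet_subset_eq (n := n) h2mod4 hodd D ε ε'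
    simp only [← Finset.mem_powerset] at h
    rw [card_filter_desSet_eq_sum, card_filter_desSet_eq_sum,
      ← Finset.add_sum_erase _ _ (Finset.mem_powerset_self D),
      ← Finset.add_sum_erase _ _ (Finset.mem_powerset_self D)] at h
    rw [Finset.sum_congr (s₁ := D.powerset.erase D) rfl fun E hE =>
      ih E (Finset.mem_ssubsets.1 hE)] at h
    exact Nat.add_right_cancel h

open Classical in
theorem natCard_desSet_eq (h2mod4 : ∀ p ∈ parts, ¬ p ≡ 2 [MOD 4])
    (hodd : ∀ p ∈ parts, Odd p → parts.count p = 1) (ε ε' : ℤˣ) (P : Finset ℕ → Prop) :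
    Nat.card {π : Perm (Fin n) // π.partition.parts = parts ∧ P (desSet n ε π)} =
      Nat.card {π : Perm (Fin n) // π.partition.parts = parts ∧ P (desSet n ε' π)} := by
  have h : ∀ (ε : ℤˣ) (π : Perm (Fin n)),
      P (desSet n ε π) ↔ desSet n ε π ∈ (Finset.Icc 1 (n - 1)).powerset.filter P := by
    intro ε π
    rw [Finset.mem_filter, Finset.mem_powerset]
    exact ⟨fun h => ⟨Finset.filter_subset _ _, h⟩, fun h => h.2⟩
  simp only [h, Nat.card_eq_fintype_card, Fintype.card_subtype]
  rw [card_filter_desSet_eq_sum, card_filter_desSet_eq_sum]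
  exact Finset.sum_congr rfl fun E _ => card_desSet_eq h2mod4 hodd ε ε' E

end Counting

theorem stmt0 (n : ℕ) (hn : 1 ≤ n) (lam : n.Partition)
    (h2mod4 : ∀ p ∈ lam.parts, ¬ p ≡ 2 [MOD 4])
    (hodd : ∀ p ∈ lam.parts, Odd p → lam.parts.count p = 1)
    (j k : ℕ) :
    Nat.card {π : Equiv.Perm (Fin n) //
        π.partition.parts = lam.parts ∧ pk n π = j ∧ des n π = k}
      = Nat.card {π : Equiv.Perm (Fin n) //
        π.partition.parts = lam.parts ∧ pk n π = j ∧ (des n π : ℤ) = (n : ℤ) - 1 - (k : ℤ)} := by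
  have hsymm := natCard_desSet_eq (n := n) h2mod4 hodd 1 (-1)
    fun D => peakCount n D = j ∧ D.card = k
  simp only [← pk_eq_peakCount, ← des_eq_card_desSet] at hsymm
  rw [hsymm]
  let e : Perm (Fin n) ≃ Perm (Fin n) := (MulAut.conj Fin.revPerm).toEquiv
  refine Nat.card_congr (e.subtypeEquiv fun π => ?_)
  have he : e π = Fin.revPerm * π * Fin.revPerm⁻¹ := rfl
  rw [he, ← Perm.partition_eq_of_isConj.1 (isConj_iff.2 ⟨Fin.revPerm, rfl⟩), pk_revPerm_conj,
    des_revPerm_conj]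
  have h := des_add_card_desSet_neg_one π
  refine and_congr_right fun _ => and_congr_right fun _ => ?_
  generalize des n π = a at h ⊢
  generalize (desSet n (-1) π).card = b at h ⊢
  omega
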